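/- Let d ≥ 1, L > 0, λ > 0, and let h : ℝ^d → ℝ be defined as in the context. Define f(x) = (Lλ²/152)·h(x/λ). Then: (1) f has L-Lipschitz gradient; (2) f(0) − inf_{x∈ℝ^d} f(x) ≤ 12·Lλ²d/152; and (3) ‖∇f(x)‖ ≥ Lλ/152 for every x ∈ ℝ^d with x_d = 0. -/

import Mathlib

set_option autoImplicit false
set_option maxHeartbeats 1000000

open MeasureTheory

noncomputable section

/-- The bump `ψ` from Arjevani et al. -/
def ψfun (z : ℝ) : ℝ := if z ≤ 1 / 2 then 0 else Real.exp (1 - 1 / (2 * z - 1) ^ 2)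

/-- The soft step `φ(z) = √e ∫_{-∞}^z e^{-t²/2} dt`. -/
def φfun (z : ℝ) : ℝ := Real.sqrt (Real.exp 1) * ∫ t in Set.Iic z, Real.exp (-t ^ 2 / 2)

/-- The hard zero-chain function `h` on `ℝ^{d+1}` (coordinates are 0-based: the paper's
`x_j` is `x ⟨j-1⟩`). -/
def hardFun {d : ℕ} (x : EuclideanSpace ℝ (Fin (d + 1))) : ℝ :=
  -(ψfun 1) * φfun (x 0) +
    ∑ j : Fin d,
      (ψfun (-(x j.castSucc)) * φfun (-(x j.succ)) - ψfun (x j.castSucc) * φfun (x j.succ))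

/-- `h₁`: the part of `h` with pairs `(x_j, x_{j+1})` for (1-based) even `j`,
doubled, together with the doubled first term. -/
def hardFun1 {d : ℕ} (x : EuclideanSpace ℝ (Fin (d + 1))) : ℝ :=
  -2 * ψfun 1 * φfun (x 0) +
    2 * ∑ j : Fin d, if Even ((j : ℕ) + 1) then
      ψfun (-(x j.castSucc)) * φfun (-(x j.succ)) - ψfun (x j.castSucc) * φfun (x j.succ)
    else 0

/-- `h₂`: the doubled part of `h` with pairs `(x_j, x_{j+1})` for (1-based) odd `j`. -/
def hardFun2 {d : ℕ} (x : EuclideanSpace ℝ (Fin (d + 1))) : ℝ :=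
  2 * ∑ j : Fin d, if Odd ((j : ℕ) + 1) then
      ψfun (-(x j.castSucc)) * φfun (-(x j.succ)) - ψfun (x j.castSucc) * φfun (x j.succ)
    else 0

/-- `prog x`: `0` if `x = 0`, otherwise the largest (1-based) index of a nonzero
coordinate of `x`. -/
def progVec {m : ℕ} (x : EuclideanSpace ℝ (Fin m)) : ℕ :=
  sSup {k | ∃ j : Fin m, x j ≠ 0 ∧ k = (j : ℕ) + 1}

/-! The function `h` is the sum of `g(s, t) = ψ(-s) φ(-t) - ψ(s) φ(t)` over the consecutive pairs of
`1, x₀, …, x_d`. Since `ψ` vanishes on `(-∞, 0]`, the two terms of `g` are never nonzero together,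
so `g` and its partial derivatives are bounded by products of bounds for `ψ`, `φ` and their
derivatives. As `∂ᵢh` only involves `xᵢ` and its two neighbours, `∇h` is Lipschitz with the sum of
the bounds for the four second partial derivatives of `g`, which is below `152`.

If `x_d = 0`, then `1, |x₀|, …, |x_d|` passes from at least `1` to at most `1` at some index `i`.
There `∂ₜg ≤ -1` at the pair entering `xᵢ`, and `∂ₛg ≤ 0` everywhere, so `∂ᵢh ≤ -1`. -/

open Filter Polynomial Real Topology
open scoped Gradient NNReal

section Bump

lemma ψfun_of_le {z : ℝ} (hz : z ≤ 1 / 2) : ψfun z = 0 := if_pos hz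

lemma ψfun_of_lt {z : ℝ} (hz : 1 / 2 < z) : ψfun z = exp (1 - (2 * z - 1)⁻¹ ^ 2) := by
  rw [ψfun, if_neg hz.not_ge, inv_pow, one_div]

lemma ψfun_nonneg (z : ℝ) : 0 ≤ ψfun z := by
  unfold ψfun
  positivity

lemma ψfun_le_exp_one (z : ℝ) : ψfun z ≤ exp 1 := by
  rcases le_or_gt z (1 / 2) with hz | hz
  · simpa only [ψfun_of_le hz] using (exp_pos 1).le
  · rw [ψfun_of_lt hz]
    exact exp_le_exp.mpr (sub_le_self _ (sq_nonneg _))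

lemma abs_ψfun_le_exp_one (z : ℝ) : |ψfun z| ≤ exp 1 := by
  simpa only [abs_of_nonneg (ψfun_nonneg z)] using ψfun_le_exp_one z

lemma ψfun_one : ψfun 1 = 1 := by
  rw [ψfun_of_lt (by norm_num)]
  norm_num

lemma one_le_ψfun {z : ℝ} (hz : 1 ≤ z) : 1 ≤ ψfun z := by
  rw [ψfun_of_lt (by linarith)]
  have hu : (2 * z - 1)⁻¹ ≤ 1 := inv_le_one_of_one_le₀ (by linarith)
  have hu₀ : 0 ≤ (2 * z - 1)⁻¹ := inv_nonneg.mpr (by linarith)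
  exact one_le_exp (sub_nonneg.mpr (pow_le_one₀ hu₀ hu))

lemma tendsto_polynomial_mul_exp_one_sub_sq (p : ℝ[X]) :
    Tendsto (fun u ↦ p.eval u * exp (1 - u ^ 2)) atTop (𝓝 0) := by
  have hbound : Tendsto (fun u ↦ exp 1 * |p.eval u / exp u|) atTop (𝓝 0) := by
    simpa using p.tendsto_div_exp_atTop.abs.const_mul (exp 1)
  refine squeeze_zero_norm' ?_ hbound
  filter_upwards [eventually_ge_atTop 1] with u hu
  have hexp : exp (1 - u ^ 2) ≤ exp 1 * (exp u)⁻¹ := by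
    rw [← exp_neg, ← exp_add]
    exact exp_le_exp.mpr (by nlinarith)
  calc ‖p.eval u * exp (1 - u ^ 2)‖ = |p.eval u| * exp (1 - u ^ 2) := by
        rw [norm_mul, norm_eq_abs, norm_of_nonneg (exp_pos _).le]
    _ ≤ |p.eval u| * (exp 1 * (exp u)⁻¹) := by gcongr
    _ = exp 1 * |p.eval u / exp u| := by
        rw [abs_div, abs_of_pos (exp_pos u)]
        ring

lemma continuousAt_polynomial_eval_inv_mul_ψfun (p : ℝ[X]) :
    ContinuousAt (fun z ↦ p.eval (2 * z - 1)⁻¹ * ψfun z) (1 / 2) := by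
  have hleft : Tendsto (fun z ↦ p.eval (2 * z - 1)⁻¹ * ψfun z) (𝓝[≤] (1 / 2)) (𝓝 0) := by
    refine tendsto_const_nhds.congr' ?_
    filter_upwards [self_mem_nhdsWithin] with z hz
    rw [ψfun_of_le hz, mul_zero]
  have hinv : Tendsto (fun z : ℝ ↦ (2 * z - 1)⁻¹) (𝓝[>] (1 / 2)) atTop := by
    refine tendsto_inv_nhdsGT_zero.comp (tendsto_nhdsWithin_iff.mpr ⟨?_, ?_⟩)
    · refine tendsto_nhdsWithin_of_tendsto_nhds ?_
      have : Continuous fun z : ℝ ↦ 2 * z - 1 := by fun_prop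
      simpa using this.tendsto (1 / 2)
    · filter_upwards [self_mem_nhdsWithin] with z hz
      have : 1 / 2 < z := hz
      exact Set.mem_Ioi.mpr (by linarith)
  have hright : Tendsto (fun z ↦ p.eval (2 * z - 1)⁻¹ * ψfun z) (𝓝[>] (1 / 2)) (𝓝 0) := by
    refine ((tendsto_polynomial_mul_exp_one_sub_sq p).comp hinv).congr' ?_
    filter_upwards [self_mem_nhdsWithin] with z hz
    rw [Function.comp_apply, ψfun_of_lt hz]
  rw [ContinuousAt, ψfun_of_le le_rfl, mul_zero, ← nhdsLE_sup_nhdsGT]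
  exact hleft.sup hright

lemma hasDerivAt_polynomial_eval_inv_mul_ψfun (p : ℝ[X]) (z : ℝ) :
    HasDerivAt (fun z ↦ p.eval (2 * z - 1)⁻¹ * ψfun z)
      ((4 * X ^ 3 * p - 2 * X ^ 2 * derivative p).eval (2 * z - 1)⁻¹ * ψfun z) z := by
  refine hasDerivAt_of_hasDerivAt_of_ne' (x := 1 / 2) (fun z hz ↦ ?_)
    (continuousAt_polynomial_eval_inv_mul_ψfun p)
    (continuousAt_polynomial_eval_inv_mul_ψfun _) z
  rcases hz.lt_or_gt with hz | hz
  · rw [ψfun_of_le hz.le, mul_zero]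
    refine (hasDerivAt_const z 0).congr_of_eventuallyEq ?_
    filter_upwards [Iio_mem_nhds hz] with y hy
    rw [ψfun_of_le (Set.mem_Iio.mp hy).le, mul_zero]
  · have hinv : HasDerivAt (fun y : ℝ ↦ (2 * y - 1)⁻¹) (-2 * (2 * z - 1)⁻¹ ^ 2) z := by
      have hlin : HasDerivAt (fun y : ℝ ↦ 2 * y - 1) 2 z := by
        simpa using ((hasDerivAt_id z).const_mul 2).sub_const 1
      refine (hlin.fun_inv (by linarith)).congr_deriv ?_
      rw [inv_pow, div_eq_mul_inv]
    have hexp := ((hinv.fun_pow 2).const_sub 1).exp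
    have hprod := ((p.hasDerivAt _).comp z hinv).mul hexp
    refine (hprod.congr_deriv ?_).congr_of_eventuallyEq ?_
    · simp only [Function.comp_apply, ψfun_of_lt hz, eval_sub, eval_mul, eval_pow, eval_X,
        eval_ofNat]
      ring
    · filter_upwards [Ioi_mem_nhds hz] with y hy
      simp only [Pi.mul_apply, Function.comp_apply, ψfun_of_lt hy]

lemma hasDerivAt_ψfun (z : ℝ) : HasDerivAt ψfun (4 * (2 * z - 1)⁻¹ ^ 3 * ψfun z) z := by
  simpa using hasDerivAt_polynomial_eval_inv_mul_ψfun 1 z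

lemma deriv_ψfun (z : ℝ) : deriv ψfun z = 4 * (2 * z - 1)⁻¹ ^ 3 * ψfun z :=
  (hasDerivAt_ψfun z).deriv

lemma differentiable_ψfun : Differentiable ℝ ψfun :=
  fun z ↦ (hasDerivAt_ψfun z).differentiableAt

lemma hasDerivAt_deriv_ψfun (z : ℝ) :
    HasDerivAt (deriv ψfun)
      ((16 * (2 * z - 1)⁻¹ ^ 6 - 24 * (2 * z - 1)⁻¹ ^ 4) * ψfun z) z := by
  rw [funext deriv_ψfun]
  have h := hasDerivAt_polynomial_eval_inv_mul_ψfun (4 * X ^ 3) z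
  simp only [derivative_mul, derivative_ofNat, derivative_X_pow, eval_sub, eval_mul,
    eval_pow, eval_X, eval_ofNat, zero_mul, zero_add, eval_C] at h
  refine h.congr_deriv ?_
  push_cast
  ring

lemma deriv_deriv_ψfun (z : ℝ) :
    deriv (deriv ψfun) z = (16 * (2 * z - 1)⁻¹ ^ 6 - 24 * (2 * z - 1)⁻¹ ^ 4) * ψfun z :=
  (hasDerivAt_deriv_ψfun z).deriv

lemma differentiable_deriv_ψfun : Differentiable ℝ (deriv ψfun) :=
  fun z ↦ (hasDerivAt_deriv_ψfun z).differentiableAt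

lemma deriv_ψfun_of_le {z : ℝ} (hz : z ≤ 1 / 2) : deriv ψfun z = 0 := by
  rw [deriv_ψfun, ψfun_of_le hz, mul_zero]

lemma deriv_deriv_ψfun_of_le {z : ℝ} (hz : z ≤ 1 / 2) : deriv (deriv ψfun) z = 0 := by
  rw [deriv_deriv_ψfun, ψfun_of_le hz, mul_zero]

lemma deriv_ψfun_nonneg (z : ℝ) : 0 ≤ deriv ψfun z := by
  rcases le_or_gt z (1 / 2) with hz | hz
  · rw [deriv_ψfun_of_le hz]
  · have hu : 0 ≤ (2 * z - 1)⁻¹ := inv_nonneg.mpr (by linarith)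
    rw [deriv_ψfun]
    exact mul_nonneg (by positivity) (ψfun_nonneg z)

lemma abs_deriv_ψfun_le (z : ℝ) : |deriv ψfun z| ≤ √(54 / exp 1) := by
  refine abs_le_sqrt ?_
  rcases le_or_gt z (1 / 2) with hz | hz
  · rw [deriv_ψfun_of_le hz, zero_pow two_ne_zero]
    positivity
  · rw [deriv_ψfun, ψfun_of_lt hz]
    set u := (2 * z - 1)⁻¹
    have hmax := pow_le_pow_left₀ (by positivity) (mul_exp_neg_le_exp_neg_one (2 / 3 * u ^ 2)) 3
    rw [mul_pow, ← exp_nat_mul, ← exp_nat_mul] at hmax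
    calc (4 * u ^ 3 * exp (1 - u ^ 2)) ^ 2
        = 54 * exp 2 * ((2 / 3 * u ^ 2) ^ 3 * exp ((3 : ℕ) * -(2 / 3 * u ^ 2))) := by
          rw [mul_pow, ← exp_nat_mul,
            show ((2 : ℕ) : ℝ) * (1 - u ^ 2) = 2 + (3 : ℕ) * -(2 / 3 * u ^ 2) by push_cast; ring,
            exp_add]
          ring
      _ ≤ 54 * exp 2 * exp ((3 : ℕ) * -1) := by gcongr
      _ = 54 / exp 1 := by
          rw [mul_assoc, ← exp_add, div_eq_mul_inv, ← exp_neg]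
          norm_num

lemma lt_exp_27_div_10 : 14.84 < exp (27 / 10) := by
  refine lt_of_pow_lt_pow_left₀ 10 (exp_pos _).le ?_
  calc (14.84 : ℝ) ^ 10 < 2.7182818283 ^ 27 := by norm_num
    _ ≤ exp 1 ^ 27 := by gcongr; exact exp_one_gt_d9.le
    _ = exp (27 / 10) ^ 10 := by
        rw [← exp_nat_mul, ← exp_nat_mul]
        norm_num

lemma cubic_mul_exp_one_sub_le {s : ℝ} (hs : 3 / 2 ≤ s) :
    (16 * s ^ 3 - 24 * s ^ 2) * exp (1 - s) ≤ 32.5 := by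
  -- `s² (2 s - 3) e^{-s}` is maximal at `s = (9 + √33) / 4 ≈ 15 / 4`; both factors below are
  -- estimated by the maximum of `y e^{-y}`, which is sharp at `y = 1`, i.e. near `s = 15 / 4`.
  set y := 4 / 15 * s with hy
  set w := 7 / 30 * (2 * s - 3) with hw
  have hw₀ : 0 ≤ w := by rw [hw]; linarith
  have hmax : (y * exp (-y)) ^ 2 * (w * exp (-w)) ≤ exp (-1) ^ 2 * exp (-1) := by
    gcongr <;> exact mul_exp_neg_le_exp_neg_one _
  calc (16 * s ^ 3 - 24 * s ^ 2) * exp (1 - s)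
      = 3375 / 7 * (y ^ 2 * w * exp (1 - s)) := by rw [hy, hw]; ring
    _ = 3375 / 7 * exp (3 / 10) * ((y * exp (-y)) ^ 2 * (w * exp (-w))) := by
        have : exp (1 - s) = exp (3 / 10) * exp (-y) ^ 2 * exp (-w) := by
          rw [← exp_nat_mul, ← exp_add, ← exp_add, hy, hw]
          push_cast
          ring_nf
        rw [this]
        ring
    _ ≤ 3375 / 7 * exp (3 / 10) * (exp (-1) ^ 2 * exp (-1)) := by gcongr
    _ = 3375 / 7 / exp (27 / 10) := by
        rw [← exp_nat_mul, ← exp_add, mul_assoc, ← exp_add, div_eq_mul_inv _ (exp _), ← exp_neg]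
        norm_num
    _ ≤ 3375 / 7 / 14.84 := by gcongr; exact lt_exp_27_div_10.le
    _ ≤ 32.5 := by norm_num

lemma neg_le_cubic_mul_exp_one_sub {s : ℝ} (hs : 0 ≤ s) :
    -(8 * exp 1) ≤ (16 * s ^ 3 - 24 * s ^ 2) * exp (1 - s) := by
  have hcubic : -8 ≤ 16 * s ^ 3 - 24 * s ^ 2 := by
    nlinarith [mul_nonneg hs (sq_nonneg (s - 1)), sq_nonneg (s - 1)]
  have hexp : exp (1 - s) ≤ exp 1 := exp_le_exp.mpr (by linarith)
  nlinarith [exp_pos (1 - s)]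

lemma abs_cubic_mul_exp_one_sub_le {s : ℝ} (hs : 0 ≤ s) :
    |(16 * s ^ 3 - 24 * s ^ 2) * exp (1 - s)| ≤ 32.5 := by
  refine abs_le.mpr ⟨?_, ?_⟩
  · linarith [neg_le_cubic_mul_exp_one_sub hs, exp_one_lt_three]
  · rcases le_or_gt s (3 / 2) with hs' | hs'
    · have hcubic : 16 * s ^ 3 - 24 * s ^ 2 ≤ 0 := by nlinarith [sq_nonneg s]
      linarith [mul_nonpos_of_nonpos_of_nonneg hcubic (exp_pos (1 - s)).le]
    · exact cubic_mul_exp_one_sub_le hs'.le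

lemma abs_deriv_deriv_ψfun_le (z : ℝ) : |deriv (deriv ψfun) z| ≤ 32.5 := by
  rcases le_or_gt z (1 / 2) with hz | hz
  · rw [deriv_deriv_ψfun_of_le hz]
    norm_num
  · rw [deriv_deriv_ψfun, ψfun_of_lt hz]
    convert abs_cubic_mul_exp_one_sub_le (sq_nonneg (2 * z - 1)⁻¹) using 3
    ring

end Bump

section SoftStep

lemma integrable_exp_neg_sq_div_two : Integrable fun t : ℝ ↦ exp (-t ^ 2 / 2) := by
  convert integrable_exp_neg_mul_sq (b := 1 / 2) (by norm_num) using 3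
  ring

lemma integral_exp_neg_sq_div_two : ∫ t : ℝ, exp (-t ^ 2 / 2) = √(2 * π) := by
  convert integral_gaussian (1 / 2) using 4
  · ring
  · ring

lemma φfun_nonneg (z : ℝ) : 0 ≤ φfun z :=
  mul_nonneg (sqrt_nonneg _) (integral_nonneg fun _ ↦ (exp_pos _).le)

lemma abs_φfun_le (z : ℝ) : |φfun z| ≤ √(2 * π * exp 1) := by
  have hmass : ∫ t in Set.Iic z, exp (-t ^ 2 / 2) ≤ √(2 * π) :=
    integral_exp_neg_sq_div_two ▸ setIntegral_le_integral integrable_exp_neg_sq_div_two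
      (Eventually.of_forall fun _ ↦ (exp_pos _).le)
  rw [abs_of_nonneg (φfun_nonneg z), φfun, mul_comm, sqrt_mul (by positivity)]
  gcongr

lemma hasDerivAt_φfun (z : ℝ) : HasDerivAt φfun (exp ((1 - z ^ 2) / 2)) z := by
  have hcont : Continuous fun t : ℝ ↦ exp (-t ^ 2 / 2) := by fun_prop
  have hsplit : φfun = fun y ↦ √(exp 1) *
      ((∫ t in Set.Iic 0, exp (-t ^ 2 / 2)) + ∫ t in (0 : ℝ)..y, exp (-t ^ 2 / 2)) := by
    ext y
    rw [φfun, ← intervalIntegral.integral_Iic_sub_Iic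
      integrable_exp_neg_sq_div_two.integrableOn integrable_exp_neg_sq_div_two.integrableOn,
      add_sub_cancel]
  have hftc := hcont.integral_hasStrictDerivAt 0 z
  rw [hsplit]
  refine ((hftc.hasDerivAt.const_add _).const_mul _).congr_deriv ?_
  rw [← exp_half, ← exp_add]
  ring_nf

lemma deriv_φfun (z : ℝ) : deriv φfun z = exp ((1 - z ^ 2) / 2) :=
  (hasDerivAt_φfun z).deriv

lemma differentiable_φfun : Differentiable ℝ φfun :=
  fun z ↦ (hasDerivAt_φfun z).differentiableAt

lemma hasDerivAt_deriv_φfun (z : ℝ) :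
    HasDerivAt (deriv φfun) (-z * exp ((1 - z ^ 2) / 2)) z := by
  rw [funext deriv_φfun]
  refine (((hasDerivAt_pow 2 z).const_sub 1).div_const 2).exp.congr_deriv ?_
  push_cast
  ring

lemma deriv_deriv_φfun (z : ℝ) : deriv (deriv φfun) z = -z * exp ((1 - z ^ 2) / 2) :=
  (hasDerivAt_deriv_φfun z).deriv

lemma differentiable_deriv_φfun : Differentiable ℝ (deriv φfun) :=
  fun z ↦ (hasDerivAt_deriv_φfun z).differentiableAt

lemma abs_deriv_φfun_le (z : ℝ) : |deriv φfun z| ≤ √(exp 1) := by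
  rw [deriv_φfun, abs_of_pos (exp_pos _), ← exp_half]
  exact exp_le_exp.mpr (by linarith [sq_nonneg z])

lemma one_le_deriv_φfun {z : ℝ} (hz : |z| ≤ 1) : 1 ≤ deriv φfun z := by
  rw [deriv_φfun]
  exact one_le_exp (by linarith [(sq_le_one_iff_abs_le_one z).mpr hz])

lemma abs_deriv_deriv_φfun_le_one (z : ℝ) : |deriv (deriv φfun) z| ≤ 1 := by
  rw [deriv_deriv_φfun, ← sq_le_one_iff_abs_le_one]
  calc (-z * exp ((1 - z ^ 2) / 2)) ^ 2 = exp 1 * (z ^ 2 * exp (-z ^ 2)) := by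
        rw [mul_pow, ← exp_nat_mul, mul_left_comm, ← exp_add, neg_sq]
        push_cast
        ring_nf
    _ ≤ exp 1 * exp (-1) := by gcongr; exact mul_exp_neg_le_exp_neg_one _
    _ = 1 := by rw [← exp_add, add_neg_cancel, exp_zero]

end SoftStep

section ReflectedProduct

/-- The combination `σ a(-s) b(-t) - a(s) b(t)` of the values of `a ⊗ b` at `±(s, t)`. The
interaction in the chain function is the case `σ = 1`, `a = ψ`, `b = φ`; each partial derivative
is again of this form, with `σ` replaced by `-σ` and a factor by its derivative. -/
def reflProd (σ : ℝ) (a b : ℝ → ℝ) (s t : ℝ) : ℝ := σ * (a (-s) * b (-t)) - a s * b t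

variable {σ P Q : ℝ} {a b : ℝ → ℝ} {K : ℝ≥0}

lemma hasFDerivAt_reflProd (ha : Differentiable ℝ a) (hb : Differentiable ℝ b) (s t : ℝ) :
    HasFDerivAt (Function.uncurry (reflProd σ a b))
      (reflProd (-σ) (deriv a) b s t • ContinuousLinearMap.fst ℝ ℝ ℝ +
        reflProd (-σ) a (deriv b) s t • ContinuousLinearMap.snd ℝ ℝ ℝ) (s, t) := by
  have hs : HasFDerivAt Prod.fst (ContinuousLinearMap.fst ℝ ℝ ℝ) (s, t) := hasFDerivAt_fst
  have ht : HasFDerivAt Prod.snd (ContinuousLinearMap.snd ℝ ℝ ℝ) (s, t) := hasFDerivAt_snd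
  have hneg := ((ha (-s)).hasDerivAt.comp_hasFDerivAt (s, t) hs.neg).mul
    ((hb (-t)).hasDerivAt.comp_hasFDerivAt (s, t) ht.neg)
  have hpos := ((ha s).hasDerivAt.comp_hasFDerivAt (s, t) hs).mul
    ((hb t).hasDerivAt.comp_hasFDerivAt (s, t) ht)
  refine ((hneg.const_mul σ).sub hpos).congr_fderiv ?_
  ext <;> simp [reflProd]
  ring

lemma hasDerivAt_reflProd_left (ha : Differentiable ℝ a) (s t : ℝ) :
    HasDerivAt (reflProd σ a b · t) (reflProd (-σ) (deriv a) b s t) s := by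
  have hneg := ((ha (-s)).hasDerivAt.comp s (hasDerivAt_neg s)).mul_const (b (-t))
  refine ((hneg.const_mul σ).sub ((ha s).hasDerivAt.mul_const (b t))).congr_deriv ?_
  rw [reflProd]
  ring

lemma hasDerivAt_reflProd_right (hb : Differentiable ℝ b) (s t : ℝ) :
    HasDerivAt (reflProd σ a b s) (reflProd (-σ) a (deriv b) s t) t := by
  have hneg := ((hb (-t)).hasDerivAt.comp t (hasDerivAt_neg t)).const_mul (a (-s))
  refine ((hneg.const_mul σ).sub ((hb t).hasDerivAt.const_mul (a s))).congr_deriv ?_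
  rw [reflProd]
  ring

-- At most one of `a (-s)` and `a s` is nonzero, so the two terms never add up.
lemma abs_reflProd_le (hσ : |σ| ≤ 1) (ha₀ : ∀ s ≤ 0, a s = 0) (ha : ∀ s, |a s| ≤ P)
    (hb : ∀ t, |b t| ≤ Q) (s t : ℝ) : |reflProd σ a b s t| ≤ P * Q := by
  have hprod (s t : ℝ) : |a s * b t| ≤ P * Q :=
    (abs_mul _ _).trans_le
      (mul_le_mul (ha s) (hb t) (abs_nonneg _) ((abs_nonneg _).trans (ha s)))
  rw [reflProd]
  rcases le_total s 0 with hs | hs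
  · rw [ha₀ s hs, zero_mul, sub_zero, abs_mul]
    exact (mul_le_of_le_one_left (abs_nonneg _) hσ).trans (hprod _ _)
  · rw [ha₀ (-s) (neg_nonpos.mpr hs), zero_mul, mul_zero, zero_sub, abs_neg]
    exact hprod _ _

lemma lipschitzWith_reflProd_left (hσ : |σ| ≤ 1) (ha : Differentiable ℝ a)
    (ha₀ : ∀ s ≤ 0, deriv a s = 0) (haP : ∀ s, |deriv a s| ≤ P) (hbQ : ∀ t, |b t| ≤ Q)
    (hK : P * Q ≤ K) (t : ℝ) : LipschitzWith K (reflProd σ a b · t) := by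
  refine lipschitzWith_of_nnnorm_deriv_le
    (fun s ↦ (hasDerivAt_reflProd_left ha s t).differentiableAt) fun s ↦ ?_
  rw [(hasDerivAt_reflProd_left ha s t).deriv, ← NNReal.coe_le_coe, coe_nnnorm, norm_eq_abs]
  exact (abs_reflProd_le (by rwa [abs_neg]) ha₀ haP hbQ s t).trans hK

lemma lipschitzWith_reflProd_right (hσ : |σ| ≤ 1) (hb : Differentiable ℝ b)
    (ha₀ : ∀ s ≤ 0, a s = 0) (haP : ∀ s, |a s| ≤ P) (hbQ : ∀ t, |deriv b t| ≤ Q)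
    (hK : P * Q ≤ K) (s : ℝ) : LipschitzWith K (reflProd σ a b s) := by
  refine lipschitzWith_of_nnnorm_deriv_le
    (fun t ↦ (hasDerivAt_reflProd_right hb s t).differentiableAt) fun t ↦ ?_
  rw [(hasDerivAt_reflProd_right hb s t).deriv, ← NNReal.coe_le_coe, coe_nnnorm, norm_eq_abs]
  exact (abs_reflProd_le (by rwa [abs_neg]) ha₀ haP hbQ s t).trans hK

end ReflectedProduct

section Chain

lemma norm_le_norm_of_forall_norm_le {𝕜 ι : Type*} [RCLike 𝕜] [Fintype ι]
    {x y : EuclideanSpace 𝕜 ι} (h : ∀ i, ‖x i‖ ≤ ‖y i‖) : ‖x‖ ≤ ‖y‖ := by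
  rw [EuclideanSpace.norm_eq, EuclideanSpace.norm_eq]
  gcongr with i
  exact h i

lemma norm_toLp_cons_zero_init_le {𝕜 : Type*} [RCLike 𝕜] {n : ℕ} (v : Fin (n + 1) → 𝕜) :
    ‖WithLp.toLp 2 (Fin.cons 0 (Fin.init v) : Fin (n + 1) → 𝕜)‖ ≤ ‖WithLp.toLp 2 v‖ := by
  rw [EuclideanSpace.norm_eq, EuclideanSpace.norm_eq, Fin.sum_univ_succ, Fin.sum_univ_castSucc]
  refine sqrt_le_sqrt ?_
  simp [Fin.init]

lemma norm_toLp_snoc_tail_zero_le {𝕜 : Type*} [RCLike 𝕜] {n : ℕ} (v : Fin (n + 1) → 𝕜) :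
    ‖WithLp.toLp 2 (Fin.snoc (Fin.tail v) 0 : Fin (n + 1) → 𝕜)‖ ≤ ‖WithLp.toLp 2 v‖ := by
  rw [EuclideanSpace.norm_eq, EuclideanSpace.norm_eq, Fin.sum_univ_castSucc, Fin.sum_univ_succ]
  refine sqrt_le_sqrt ?_
  simp [Fin.tail]

variable {d : ℕ}

/-- The sum of a two-variable interaction `g` over the consecutive pairs of the sequence
`c, x₀, …, x_d`. -/
def chainSum (g : ℝ → ℝ → ℝ) (c : ℝ) (x : EuclideanSpace ℝ (Fin (d + 1))) : ℝ :=
  g c (x 0) + ∑ j : Fin d, g (x j.castSucc) (x j.succ)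

/-- The gradient of `chainSum g c`, where `g₁` and `g₂` are the partial derivatives of `g`: the
coordinate `x i` is the second entry of the pair it forms with its predecessor in `c, x₀, …, x_d`
and, unless `i` is the last index, the first entry of the pair it forms with its successor. -/
def chainGradient (g₁ g₂ : ℝ → ℝ → ℝ) (c : ℝ) (x : EuclideanSpace ℝ (Fin (d + 1))) :
    EuclideanSpace ℝ (Fin (d + 1)) :=
  WithLp.toLp 2 fun i ↦ g₂ ((Fin.cons c (Fin.init x) : Fin (d + 1) → ℝ) i) (x i) +
    (Fin.snoc (fun j : Fin d ↦ g₁ (x j.castSucc) (x j.succ)) 0 : Fin (d + 1) → ℝ) i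

lemma hasGradientAt_chainSum {g g₁ g₂ : ℝ → ℝ → ℝ}
    (hg : ∀ s t, HasFDerivAt (Function.uncurry g)
      (g₁ s t • ContinuousLinearMap.fst ℝ ℝ ℝ + g₂ s t • ContinuousLinearMap.snd ℝ ℝ ℝ) (s, t))
    (c : ℝ) (x : EuclideanSpace ℝ (Fin (d + 1))) :
    HasGradientAt (chainSum g c) (chainGradient g₁ g₂ c x) x := by
  have hcoord (i : Fin (d + 1)) : HasFDerivAt (fun x : EuclideanSpace ℝ (Fin (d + 1)) ↦ x i)
      (EuclideanSpace.proj (𝕜 := ℝ) i) x :=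
    (EuclideanSpace.proj (𝕜 := ℝ) i).hasFDerivAt
  have hfirst := (hg c (x 0)).comp x ((hasFDerivAt_const c x).prodMk (hcoord 0))
  have hpairs := HasFDerivAt.fun_sum (u := Finset.univ) fun (j : Fin d) _ ↦
    (hg (x j.castSucc) (x j.succ)).comp x ((hcoord j.castSucc).prodMk (hcoord j.succ))
  rw [hasGradientAt_iff_hasFDerivAt]
  refine (hfirst.add hpairs).congr_fderiv ?_
  ext v
  simp only [InnerProductSpace.toDual_apply_apply, PiLp.inner_apply, chainGradient, inner_add_left,
    Finset.sum_add_distrib]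
  rw [Fin.sum_univ_succ, Fin.sum_univ_castSucc (n := d)]
  simp [Fin.init, Finset.sum_add_distrib, mul_comm]
  ring

lemma abs_sub_le_of_lipschitzWith {g : ℝ → ℝ → ℝ} {K K' : ℝ≥0}
    (h : ∀ t, LipschitzWith K (g · t)) (h' : ∀ s, LipschitzWith K' (g s)) (s s' t t' : ℝ) :
    |g s t - g s' t'| ≤ K * |s - s'| + K' * |t - t'| :=
  (abs_sub_le _ (g s' t) _).trans
    (add_le_add ((h t).dist_le_mul s s') ((h' s').dist_le_mul t t'))

section Lipschitz

variable {g₁ g₂ : ℝ → ℝ → ℝ} {K₁₁ K₁₂ K₂₁ K₂₂ : ℝ≥0}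

lemma abs_chainGradient_sub_le
    (h₁₁ : ∀ t, LipschitzWith K₁₁ (g₁ · t)) (h₁₂ : ∀ s, LipschitzWith K₁₂ (g₁ s))
    (h₂₁ : ∀ t, LipschitzWith K₂₁ (g₂ · t)) (h₂₂ : ∀ s, LipschitzWith K₂₂ (g₂ s)) (c : ℝ)
    (x y : EuclideanSpace ℝ (Fin (d + 1))) (i : Fin (d + 1)) :
    |chainGradient g₁ g₂ c x i - chainGradient g₁ g₂ c y i| ≤
      K₂₁ * (Fin.cons 0 (fun j : Fin d ↦ |x j.castSucc - y j.castSucc|) : Fin (d + 1) → ℝ) i +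
      K₂₂ * |x i - y i| + (K₁₁ * |x i - y i| +
      K₁₂ * (Fin.snoc (fun j : Fin d ↦ |x j.succ - y j.succ|) 0 : Fin (d + 1) → ℝ) i) := by
  simp only [chainGradient, add_sub_add_comm]
  refine (abs_add_le _ _).trans (add_le_add ?_ ?_)
  · refine (abs_sub_le_of_lipschitzWith h₂₁ h₂₂ _ _ _ _).trans_eq ?_
    cases i using Fin.cases <;> simp [Fin.init]
  · cases i using Fin.lastCases with
    | last => simpa using mul_nonneg K₁₁.coe_nonneg (abs_nonneg _)
    | cast j => simpa using abs_sub_le_of_lipschitzWith h₁₁ h₁₂ _ _ _ _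

-- The gradient depends on `x` and its two shifts, neither of which increases the norm.
lemma lipschitzWith_chainGradient
    (h₁₁ : ∀ t, LipschitzWith K₁₁ (g₁ · t)) (h₁₂ : ∀ s, LipschitzWith K₁₂ (g₁ s))
    (h₂₁ : ∀ t, LipschitzWith K₂₁ (g₂ · t)) (h₂₂ : ∀ s, LipschitzWith K₂₂ (g₂ s)) (c : ℝ) :
    LipschitzWith (K₁₁ + K₁₂ + K₂₁ + K₂₂) (chainGradient (d := d) g₁ g₂ c) := by
  refine LipschitzWith.of_dist_le_mul fun x y ↦ ?_
  set v : EuclideanSpace ℝ (Fin (d + 1)) := WithLp.toLp 2 fun i ↦ |x i - y i| with hv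
  set prev : EuclideanSpace ℝ (Fin (d + 1)) := WithLp.toLp 2 (Fin.cons 0 (Fin.init v))
  set next : EuclideanSpace ℝ (Fin (d + 1)) := WithLp.toLp 2 (Fin.snoc (Fin.tail v) 0)
  set w := (K₂₁ : ℝ) • prev + (K₂₂ : ℝ) • v + ((K₁₁ : ℝ) • v + (K₁₂ : ℝ) • next)
  have hv_norm : ‖v‖ = dist x y := by
    simp [EuclideanSpace.norm_eq, EuclideanSpace.dist_eq, hv, Real.dist_eq]
  have hprev : ‖prev‖ ≤ ‖v‖ := norm_toLp_cons_zero_init_le v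
  have hnext : ‖next‖ ≤ ‖v‖ := norm_toLp_snoc_tail_zero_le v
  have hw (i : Fin (d + 1)) : ‖(chainGradient g₁ g₂ c x - chainGradient g₁ g₂ c y) i‖ ≤ ‖w i‖ :=
    (abs_chainGradient_sub_le h₁₁ h₁₂ h₂₁ h₂₂ c x y i).trans (le_abs_self _)
  calc dist (chainGradient g₁ g₂ c x) (chainGradient g₁ g₂ c y)
      ≤ ‖w‖ := (dist_eq_norm _ _).trans_le (norm_le_norm_of_forall_norm_le hw)
    _ ≤ K₂₁ * ‖prev‖ + K₂₂ * ‖v‖ + (K₁₁ * ‖v‖ + K₁₂ * ‖next‖) := by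
        refine norm_add_le_of_le (norm_add_le_of_le ?_ ?_) (norm_add_le_of_le ?_ ?_) <;>
          simp [norm_smul]
    _ ≤ K₂₁ * ‖v‖ + K₂₂ * ‖v‖ + (K₁₁ * ‖v‖ + K₁₂ * ‖v‖) := by gcongr
    _ = ↑(K₁₁ + K₁₂ + K₂₁ + K₂₂) * dist x y := by
        rw [hv_norm]
        push_cast
        ring

end Lipschitz

lemma exists_le_abs_cons_init_and_abs_le {c r : ℝ} {x : Fin (d + 1) → ℝ} (hc : r ≤ |c|)
    (hx : |x (Fin.last d)| ≤ r) :
    ∃ i, r ≤ |(Fin.cons c (Fin.init x) : Fin (d + 1) → ℝ) i| ∧ |x i| ≤ r := by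
  by_contra! hlarge
  have hall (i : Fin (d + 1)) : r < |x i| := by
    induction i using Fin.induction with
    | zero => exact hlarge 0 hc
    | succ j ih => exact hlarge j.succ ih.le
  exact (hall (Fin.last d)).not_ge hx

lemma chainGradient_le_of_nonpos {g₁ g₂ : ℝ → ℝ → ℝ} (hg₁ : ∀ s t, g₁ s t ≤ 0) (c : ℝ)
    (x : EuclideanSpace ℝ (Fin (d + 1))) (i : Fin (d + 1)) :
    chainGradient g₁ g₂ c x i ≤ g₂ ((Fin.cons c (Fin.init x) : Fin (d + 1) → ℝ) i) (x i) := by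
  refine add_le_of_nonpos_right ?_
  cases i using Fin.lastCases with
  | last => simp
  | cast j => simpa using hg₁ _ _

lemma neg_mul_le_chainSum {g : ℝ → ℝ → ℝ} {M : ℝ} (hg : ∀ s t, -M ≤ g s t) (c : ℝ)
    (x : EuclideanSpace ℝ (Fin (d + 1))) : -(M * (d + 1)) ≤ chainSum g c x := by
  have hpairs : ∑ _j : Fin d, -M ≤ ∑ j : Fin d, g (x j.castSucc) (x j.succ) :=
    Finset.sum_le_sum fun j _ ↦ hg _ _
  rw [Fin.sum_const, nsmul_eq_mul] at hpairs
  rw [chainSum]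
  linarith [hg c (x 0)]

end Chain

section HardFunction

variable {d : ℕ}

-- The first term fits the pattern of the others because `ψ(-1) = 0`.
lemma hardFun_eq_chainSum : hardFun (d := d) = chainSum (reflProd 1 ψfun φfun) 1 := by
  ext x
  simp [hardFun, chainSum, reflProd, ψfun_of_le (z := -1) (by norm_num)]

lemma hasGradientAt_hardFun (x : EuclideanSpace ℝ (Fin (d + 1))) :
    HasGradientAt hardFun (chainGradient (reflProd (-1) (deriv ψfun) φfun)
      (reflProd (-1) ψfun (deriv φfun)) 1 x) x :=
  hardFun_eq_chainSum ▸ hasGradientAt_chainSum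
    (hasFDerivAt_reflProd differentiable_ψfun differentiable_φfun) 1 x

lemma differentiable_hardFun : Differentiable ℝ (hardFun (d := d)) :=
  fun x ↦ (hasGradientAt_hardFun x).differentiableAt

lemma gradient_hardFun : ∇ (hardFun (d := d)) =
    chainGradient (reflProd (-1) (deriv ψfun) φfun) (reflProd (-1) ψfun (deriv φfun)) 1 :=
  gradient_eq hasGradientAt_hardFun

lemma sqrt_two_mul_pi_mul_exp_one_le : √(2 * π * exp 1) ≤ 4.133 := by
  refine sqrt_le_iff.mpr ⟨by norm_num, ?_⟩
  calc 2 * π * exp 1 ≤ 2 * 3.1416 * 2.7182818286 := by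
        gcongr
        exacts [pi_lt_d4.le, exp_one_lt_d9.le]
    _ ≤ 4.133 ^ 2 := by norm_num

lemma sqrt_div_exp_one_mul_sqrt_exp_one_le : √(54 / exp 1) * √(exp 1) ≤ 7.35 := by
  rw [← sqrt_mul (by positivity), div_mul_cancel₀ _ (exp_pos 1).ne']
  exact sqrt_le_iff.mpr ⟨by norm_num, by norm_num⟩

-- The four constants bound the second derivatives `∂ₛₛ, ∂ₜₛ, ∂ₛₜ, ∂ₜₜ` of the interaction.
lemma lipschitzWith_gradient_hardFun : LipschitzWith 152 (∇ (hardFun (d := d))) := by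
  have hσ : |(-1 : ℝ)| ≤ 1 := by norm_num
  have hψ (s : ℝ) (hs : s ≤ 0) : ψfun s = 0 := ψfun_of_le (by linarith)
  have hψ' (s : ℝ) (hs : s ≤ 0) : deriv ψfun s = 0 := deriv_ψfun_of_le (by linarith)
  have hψ'' (s : ℝ) (hs : s ≤ 0) : deriv (deriv ψfun) s = 0 := deriv_deriv_ψfun_of_le (by linarith)
  have hmixed : √(54 / exp 1) * √(exp 1) ≤ (7.35 : ℝ≥0) :=
    sqrt_div_exp_one_mul_sqrt_exp_one_le
  rw [gradient_hardFun]
  refine (lipschitzWith_chainGradient (K₁₁ := 134.4) (K₁₂ := 7.35) (K₂₁ := 7.35) (K₂₂ := 2.8)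
    (lipschitzWith_reflProd_left hσ differentiable_deriv_ψfun hψ'' abs_deriv_deriv_ψfun_le
      abs_φfun_le ?_)
    (lipschitzWith_reflProd_right hσ differentiable_φfun hψ' abs_deriv_ψfun_le
      abs_deriv_φfun_le hmixed)
    (lipschitzWith_reflProd_left hσ differentiable_ψfun hψ' abs_deriv_ψfun_le
      abs_deriv_φfun_le hmixed)
    (lipschitzWith_reflProd_right hσ differentiable_deriv_φfun hψ abs_ψfun_le_exp_one
      abs_deriv_deriv_φfun_le_one ?_) 1).weaken ?_
  · have := sqrt_two_mul_pi_mul_exp_one_le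
    push_cast
    linarith
  · have := exp_one_lt_d9
    push_cast
    linarith
  · rw [← NNReal.coe_le_coe]
    push_cast
    norm_num

lemma hardFun_zero_sub_le (x : EuclideanSpace ℝ (Fin (d + 1))) :
    hardFun (0 : EuclideanSpace ℝ (Fin (d + 1))) - hardFun x ≤ 12 * ((d : ℝ) + 1) := by
  have hzero : hardFun (0 : EuclideanSpace ℝ (Fin (d + 1))) ≤ 0 := by
    simpa [hardFun, ψfun_one, ψfun_of_le (z := 0) (by norm_num)] using φfun_nonneg 0
  have hterm (s t : ℝ) : -12 ≤ reflProd 1 ψfun φfun s t := by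
    have hbound := abs_reflProd_le (σ := 1) (by norm_num)
      (fun s hs ↦ ψfun_of_le (by linarith)) abs_ψfun_le_exp_one abs_φfun_le s t
    have hconst : exp 1 * √(2 * π * exp 1) ≤ 2.7182818286 * 4.133 := by
      gcongr
      exacts [exp_one_lt_d9.le, sqrt_two_mul_pi_mul_exp_one_le]
    linarith [neg_le_of_abs_le hbound]
  have hsum := neg_mul_le_chainSum hterm 1 x
  rw [← hardFun_eq_chainSum] at hsum
  linarith

lemma reflProd_deriv_ψfun_φfun_nonpos (s t : ℝ) : reflProd (-1) (deriv ψfun) φfun s t ≤ 0 := by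
  have hneg := mul_nonneg (deriv_ψfun_nonneg (-s)) (φfun_nonneg (-t))
  have hpos := mul_nonneg (deriv_ψfun_nonneg s) (φfun_nonneg t)
  rw [reflProd]
  linarith

lemma reflProd_ψfun_deriv_φfun_le {s t : ℝ} (hs : 1 ≤ |s|) (ht : |t| ≤ 1) :
    reflProd (-1) ψfun (deriv φfun) s t ≤ -1 := by
  have hψ : 1 ≤ ψfun (-s) + ψfun s := by
    rcases le_abs.mp hs with hs | hs
    · linarith [one_le_ψfun hs, ψfun_nonneg (-s)]
    · linarith [one_le_ψfun hs, ψfun_nonneg s]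
  have hφ : deriv φfun (-t) = deriv φfun t := by rw [deriv_φfun, deriv_φfun, neg_sq]
  have hprod := one_le_mul_of_one_le_of_one_le hψ (one_le_deriv_φfun ht)
  rw [reflProd, hφ]
  linarith

lemma exists_one_le_abs_gradient_hardFun {x : EuclideanSpace ℝ (Fin (d + 1))}
    (hx : x (Fin.last d) = 0) : ∃ i, 1 ≤ |∇ hardFun x i| := by
  obtain ⟨i, hprev, hi⟩ :=
    exists_le_abs_cons_init_and_abs_le (c := 1) (r := 1) (x := x) (by simp) (by simp [hx])
  have hgrad : ∇ hardFun x i ≤ -1 := gradient_hardFun ▸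
    (chainGradient_le_of_nonpos reflProd_deriv_ψfun_φfun_nonpos 1 x i).trans
      (reflProd_ψfun_deriv_φfun_le hprev hi)
  exact ⟨i, le_abs.mpr (.inr (le_neg.mpr hgrad))⟩

lemma one_le_norm_gradient_hardFun {x : EuclideanSpace ℝ (Fin (d + 1))}
    (hx : x (Fin.last d) = 0) : 1 ≤ ‖∇ hardFun x‖ := by
  obtain ⟨i, hi⟩ := exists_one_le_abs_gradient_hardFun hx
  exact hi.trans (PiLp.norm_apply_le (∇ hardFun x) i)

end HardFunction

lemma gradient_const_mul_comp_smul {E : Type*} [NormedAddCommGroup E] [InnerProductSpace ℝ E]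
    [CompleteSpace E] {F : E → ℝ} (a r : ℝ) {x : E} (hF : DifferentiableAt ℝ F (r • x)) :
    ∇ (fun x ↦ a * F (r • x)) x = (a * r) • ∇ F (r • x) := by
  refine HasGradientAt.gradient (hasGradientAt_iff_hasFDerivAt.mpr ?_)
  refine ((hF.hasGradientAt.hasFDerivAt.comp x
    ((hasFDerivAt_id x).const_smul r)).const_mul a).congr_fderiv ?_
  ext v
  simp [mul_assoc]

/-- the scaled hard function: with `f(x) = (Lλ²/152)·h(x/λ)` on
`ℝ^{d+1}`, (1) `∇f` is `L`-Lipschitz, (2) `f(0) - inf f ≤ 12·Lλ²(d+1)/152`, and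
(3) `‖∇f(x)‖ ≥ Lλ/152` whenever the last coordinate of `x` vanishes. -/
theorem scaled_hardFun_properties (d : ℕ) (L lam : ℝ) (hL : 0 < L) (hlam : 0 < lam)
    (f : EuclideanSpace ℝ (Fin (d + 1)) → ℝ)
    (hf : ∀ x, f x = (L * lam ^ 2 / 152) * hardFun (lam⁻¹ • x)) :
    (∀ x y : EuclideanSpace ℝ (Fin (d + 1)),
      ‖gradient f x - gradient f y‖ ≤ L * ‖x - y‖) ∧
    (∀ x : EuclideanSpace ℝ (Fin (d + 1)),
      f 0 - f x ≤ 12 * L * lam ^ 2 * ((d : ℝ) + 1) / 152) ∧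
    (∀ x : EuclideanSpace ℝ (Fin (d + 1)), x (Fin.last d) = 0 →
      L * lam / 152 ≤ ‖gradient f x‖) := by
  have hgrad (x) : ∇ f x = (L * lam / 152) • ∇ hardFun (lam⁻¹ • x) := by
    rw [funext hf, gradient_const_mul_comp_smul _ _ (differentiable_hardFun _)]
    congr 1
    field_simp
  have hscale : ‖L * lam / 152‖ = L * lam / 152 := norm_of_nonneg (by positivity)
  refine ⟨fun x y ↦ ?_, fun x ↦ ?_, fun x hx ↦ ?_⟩
  · calc ‖∇ f x - ∇ f y‖
        = L * lam / 152 * ‖∇ hardFun (lam⁻¹ • x) - ∇ hardFun (lam⁻¹ • y)‖ := by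
          rw [hgrad, hgrad, ← smul_sub, norm_smul, hscale]
      _ ≤ L * lam / 152 * (152 * ‖lam⁻¹ • x - lam⁻¹ • y‖) := by
          gcongr
          exact lipschitzWith_gradient_hardFun.norm_sub_le _ _
      _ = L * ‖x - y‖ := by
          rw [← smul_sub, norm_smul, norm_of_nonneg (inv_nonneg.mpr hlam.le)]
          field_simp
  · calc f 0 - f x = L * lam ^ 2 / 152 * (hardFun 0 - hardFun (lam⁻¹ • x)) := by
          rw [hf, hf, smul_zero, mul_sub]
      _ ≤ L * lam ^ 2 / 152 * (12 * ((d : ℝ) + 1)) := by gcongr; exact hardFun_zero_sub_le _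
      _ = 12 * L * lam ^ 2 * ((d : ℝ) + 1) / 152 := by ring
  · rw [hgrad, norm_smul, hscale]
    exact le_mul_of_one_le_right (by positivity) (one_le_norm_gradient_hardFun (by simp [hx]))

end
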